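/- arXiv:2312.06058 — 7 statements merged into one kernel-verified Lean document; each statement's English description precedes it below -/
import Mathlib

section
/- Let f : G → Q be a surjective group homomorphism with G finitely generated and Q finitely presented, and let P = {(g,h) ∈ G×G : f(g) = f(h)} be the fibre product of f with itself. Then P is a finitely generated group. -/
/-!
The kernel of `f` is the normal closure of a finite set `T`
(`exists_finite_normalClosure_eq_ker`). To see this, take a finite presentation `π : F → Q`,
lift it through `f` to `φ : F → G`, and let `T` consist of the images under `φ` of the relators
together with the elements `s⁻¹ * φ (w s)`, where `s` runs over a finite generating set of `G` and
`π (w s) = f s`. Modulo the normal closure of `T` every element of `G` comes from `F`, and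
those coming from `ker π` are trivial.

The fibre product is then generated by the diagonal elements `(s, s)` and the elements `(t, 1)`
with `t ∈ T`: conjugating `(t, 1)` by the diagonal yields `(n, 1)` for all `n ∈ ker f`, and
`(g, h) = (g * h⁻¹, 1) * (h, h)`.
-/

/-- The fibre product `{(g,h) ∈ G × G : f g = f h}` of a homomorphism `f : G →* Q` with
itself, as a subgroup of `G × G`. -/
def fiberProduct {G Q : Type*} [Group G] [Group Q] (f : G →* Q) : Subgroup (G × G) where
  carrier := {x | f x.1 = f x.2}
  one_mem' := rfl
  mul_mem' := by
    intro a b ha hb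
    simp only [Set.mem_setOf_eq, Prod.fst_mul, Prod.snd_mul, map_mul] at *
    rw [ha, hb]
  inv_mem' := by
    intro a ha
    simp only [Set.mem_setOf_eq, Prod.fst_inv, Prod.snd_inv, map_inv] at *
    rw [ha]

/-- A group is finitely presented if it is the quotient of a finitely generated free
group by the normal closure of a finite set of relators. -/
def FinitelyPresented (G : Type*) [Group G] : Prop :=
  ∃ (n : ℕ) (rels : Finset (FreeGroup (Fin n))),
    Nonempty (G ≃* PresentedGroup ((rels : Set (FreeGroup (Fin n)))))

/-- The kernel of a surjection from a finitely generated group onto a finitely presented group is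
the normal closure of a finite set. -/
theorem exists_finite_normalClosure_eq_ker {G Q : Type*} [Group G] [Group Q]
    (hG : Group.FG G) (hQ : FinitelyPresented Q)
    (f : G →* Q) (hf : Function.Surjective f) :
    ∃ T : Set G, T.Finite ∧ Subgroup.normalClosure T = f.ker := by
  obtain ⟨S, hS, hSfin⟩ := Group.fg_iff.1 hG
  obtain ⟨n, R, ⟨e⟩⟩ := hQ
  obtain ⟨π, hπ, hker⟩ : ∃ π : FreeGroup (Fin n) →* Q, Function.Surjective π ∧
      ∀ w, π w = 1 ↔ w ∈ Subgroup.normalClosure (R : Set (FreeGroup (Fin n))) := by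
    refine ⟨e.symm.toMonoidHom.comp (PresentedGroup.mk (R : Set (FreeGroup (Fin n)))),
      e.symm.surjective.comp (PresentedGroup.mk_surjective _), fun w => ?_⟩
    change e.symm (PresentedGroup.mk (R : Set (FreeGroup (Fin n))) w) = 1 ↔ _
    rw [EmbeddingLike.map_eq_one_iff]
    exact PresentedGroup.mk_eq_one_iff
  choose σ hσ using hf
  obtain ⟨φ, hφ⟩ : ∃ φ : FreeGroup (Fin n) →* G, ∀ w, f (φ w) = π w := by
    refine ⟨FreeGroup.lift fun i => σ (π (FreeGroup.of i)), fun w => ?_⟩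
    refine DFunLike.congr_fun (f := f.comp _) (g := π) ?_ w
    ext i
    simp [hσ]
  choose w hw using fun s : G => hπ (f s)
  let T : Set G := φ '' R ∪ (fun s => s⁻¹ * φ (w s)) '' S
  have hle : Subgroup.normalClosure T ≤ f.ker := by
    refine Subgroup.normalClosure_le_normal ?_
    rintro _ (⟨r, hr, rfl⟩ | ⟨s, -, rfl⟩)
    · exact (hφ r).trans ((hker r).2 (Subgroup.subset_normalClosure hr))
    · simp [MonoidHom.mem_ker, hφ, hw]
  refine ⟨T, (R.finite_toSet.image _).union (hSfin.image _), le_antisymm hle ?_⟩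
  have hR : Subgroup.normalClosure (R : Set (FreeGroup (Fin n))) ≤
        (Subgroup.normalClosure T).comap φ :=
    Subgroup.normalClosure_le_normal fun r hr =>
      Subgroup.subset_normalClosure (Or.inl ⟨r, hr, rfl⟩)
  let q := QuotientGroup.mk' (Subgroup.normalClosure T)
  have htop : (⊤ : Subgroup G) ≤ (q.comp φ).range.comap q := by
    rw [← hS, Subgroup.closure_le]
    intro s hs
    have hmem : s⁻¹ * φ (w s) ∈ Subgroup.normalClosure T :=
      Subgroup.subset_normalClosure (Or.inr ⟨s, hs, rfl⟩)
    exact ⟨w s, (QuotientGroup.eq.2 hmem).symm⟩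
  intro g hg
  obtain ⟨v, hv⟩ := htop (Subgroup.mem_top g)
  have hmem : g⁻¹ * φ v ∈ Subgroup.normalClosure T := QuotientGroup.eq.1 hv.symm
  have hv1 : π v = 1 := by
    have := hle hmem
    rw [MonoidHom.mem_ker] at this hg
    simpa [hg, hφ] using this
  have hφv : φ v ∈ Subgroup.normalClosure T := hR ((hker v).1 hv1)
  exact (Subgroup.inv_mem_iff _).1 ((Subgroup.mul_mem_cancel_right _ hφv).1 hmem)

/-- **Theorem (Platonov–Tavgen / Bridson–Grunewald, part 1).** If `f : G → Q` is a
surjective homomorphism with `G` finitely generated and `Q` finitely presented, then the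
fibre product `P = {(g,h) : f g = f h} ≤ G × G` is finitely generated. -/
theorem fiberProduct_fg_of_fg_of_fp
    (G Q : Type) [Group G] [Group Q]
    (hG : Group.FG G) (hQ : FinitelyPresented Q)
    (f : G →* Q) (hf : Function.Surjective f) :
    (fiberProduct f).FG := by
  obtain ⟨T, hTfin, hT⟩ := exists_finite_normalClosure_eq_ker hG hQ f hf
  obtain ⟨S, hS, hSfin⟩ := Group.fg_iff.1 hG
  let X : Set (G × G) := (fun s => (s, s)) '' S ∪ (fun t => (t, 1)) '' T
  refine (Subgroup.fg_iff _).2 ⟨X, le_antisymm ?_ ?_, (hSfin.image _).union (hTfin.image _)⟩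
  · rw [Subgroup.closure_le]
    rintro _ (⟨s, -, rfl⟩ | ⟨t, ht, rfl⟩)
    · exact (rfl : f s = f s)
    · have htk : t ∈ f.ker := hT ▸ Subgroup.subset_normalClosure ht
      exact (MonoidHom.mem_ker.1 htk).trans (map_one f).symm
  · have hdiag : ∀ g : G, (g, g) ∈ Subgroup.closure X := by
      have : (⊤ : Subgroup G) ≤
          (Subgroup.closure X).comap ((MonoidHom.id G).prod (MonoidHom.id G)) := by
        rw [← hS, Subgroup.closure_le]
        exact fun s hs => Subgroup.subset_closure (Or.inl ⟨s, hs, rfl⟩)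
      exact fun g => this (Subgroup.mem_top g)
    -- The slice `{n | (n, 1) ∈ closure X}` is normal because `closure X` contains the diagonal.
    have hnormal : ((Subgroup.closure X).comap (MonoidHom.inl G G)).Normal := by
      refine ⟨fun n hn g => ?_⟩
      have := mul_mem (mul_mem (hdiag g) hn) (inv_mem (hdiag g))
      simpa [Subgroup.mem_comap] using this
    have hker : f.ker ≤ (Subgroup.closure X).comap (MonoidHom.inl G G) := by
      rw [← hT]
      exact Subgroup.normalClosure_le_normal fun t ht =>
        Subgroup.subset_closure (Or.inr ⟨t, ht, rfl⟩)
    rintro ⟨g, h⟩ (hgh : f g = f h)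
    have hmem : g * h⁻¹ ∈ f.ker := by simp [MonoidHom.mem_ker, hgh]
    have hinl : (g * h⁻¹, (1 : G)) ∈ Subgroup.closure X := hker hmem
    simpa using mul_mem hinl (hdiag h)
end

section
/- Let f : G → Q be a surjective group homomorphism with G finitely generated and Q finitely presented, and let P = {(g,h) ∈ G×G : f(g) = f(h)} ≤ G×G be the fibre product. Suppose that every homomorphism from Q to a finite group is trivial (i.e. the profinite completion of Q is trivial) and that H₂(Q,ℤ) = 0. Then the inclusion P ↪ G×G induces an isomorphism of profinite completions: for every finite group F, the restriction map Hom(G×G, F) → Hom(P, F) is a bijection. -/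
/-- `H₂(G,ℤ) = 0`, expressed via Hopf's formula: for every presentation `G = F/R` with
`F` a free group, `R ∩ [F,F] ≤ [F,R]`. -/
def SchurMultiplierTrivial (G : Type u) [Group G] : Prop :=
  ∀ (ι : Type u) (π : FreeGroup ι →* G), Function.Surjective π →
    MonoidHom.ker π ⊓ commutator (FreeGroup ι) ≤
      ⁅(⊤ : Subgroup (FreeGroup ι)), MonoidHom.ker π⁆

/-- Every homomorphism from `Q` to a finite group is trivial, i.e. the profinite
completion of `Q` is trivial. -/
def ProfinitelyTrivial (Q : Type*) [Group Q] : Prop :=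
  ∀ (F : Type) [Group F] [Finite F] (φ : Q →* F) (q : Q), φ q = 1

open scoped commutatorElement

/-! ### Groups without finite quotients -/

theorem FinitelyPresented.fg {Q : Type*} [Group Q] (hQ : FinitelyPresented Q) : Group.FG Q := by
  obtain ⟨n, rels, ⟨e⟩⟩ := hQ
  have : Group.FG (PresentedGroup (rels : Set (FreeGroup (Fin n)))) :=
    QuotientGroup.fg _
  exact Group.fg_of_surjective (f := e.symm.toMonoidHom) e.symm.surjective

theorem ProfinitelyTrivial.eq_top {Q : Type} [Group Q] (h : ProfinitelyTrivial Q)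
    (H : Subgroup Q) [H.FiniteIndex] : H = ⊤ := by
  rw [eq_top_iff]
  intro q _
  have h1 := h (Equiv.Perm (Q ⧸ H)) (MulAction.toPermHom Q (Q ⧸ H)) q
  have h2 := congrArg (fun s : Equiv.Perm (Q ⧸ H) => s ((1 : Q) : Q ⧸ H)) h1
  simp only [MulAction.toPermHom_apply, MulAction.toPerm_apply, Equiv.Perm.coe_one, id] at h2
  have h3 : ((q * 1 : Q) : Q ⧸ H) = ((1 : Q) : Q ⧸ H) := h2
  rw [mul_one, eq_comm, QuotientGroup.eq] at h3
  simpa using h3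

/-- A nontrivial finitely generated abelian group has a maximal proper subgroup, and the quotient
is a simple `ℤ`-module, hence finite. -/
theorem exists_finite_quotient (A : Type) [AddCommGroup A] [Module.Finite ℤ A] [Nontrivial A] :
    ∃ m : Submodule ℤ A, m ≠ ⊤ ∧ Finite (A ⧸ m) := by
  obtain ⟨m, hm⟩ := IsCoatomic.exists_coatom (Submodule ℤ A)
  refine ⟨m, hm.1, ?_⟩
  have hs : IsSimpleModule ℤ (A ⧸ m) := isSimpleModule_iff_isCoatom.2 hm
  obtain ⟨I, hI, ⟨e⟩⟩ := isSimpleModule_iff_quot_maximal.1 hs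
  have hI0 : I ≠ ⊥ := Ring.ne_bot_of_isMaximal_of_not_isField hI Int.not_isField
  have : Finite (ℤ ⧸ I) := Ideal.finiteQuotientOfFreeOfNeBot I hI0
  exact Finite.of_equiv _ e.symm.toEquiv

theorem commutator_eq_top {Q : Type} [Group Q] (hfg : Group.FG Q) (h : ProfinitelyTrivial Q) :
    commutator Q = ⊤ := by
  by_contra hne
  have hnt : Nontrivial (Abelianization Q) :=
    (QuotientGroup.nontrivial_iff).2 hne
  have : Group.FG (Abelianization Q) := QuotientGroup.fg _
  have : Module.Finite ℤ (Additive (Abelianization Q)) :=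
    Module.Finite.iff_addGroup_fg.2 inferInstance
  obtain ⟨m, hm, hfin⟩ := exists_finite_quotient (Additive (Abelianization Q))
  apply hm
  rw [eq_top_iff]
  intro x _
  obtain ⟨q, hq⟩ := QuotientGroup.mk_surjective (s := commutator Q) x.toMul
  have h1 := h (Multiplicative (Additive (Abelianization Q) ⧸ m))
    ((AddMonoidHom.toMultiplicativeRight
      (m.mkQ.toAddMonoidHom)).comp Abelianization.of) q
  have h2 : m.mkQ (Additive.ofMul (Abelianization.of q)) = 0 := h1
  have h3 : Additive.ofMul (Abelianization.of q) = x := hq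
  rw [h3] at h2
  simpa using h2

theorem eq_top_of_ker_le {G Q : Type} [Group G] [Group Q] {f : G →* Q}
    (hf : Function.Surjective f) (h : ProfinitelyTrivial Q) (H : Subgroup G) [H.FiniteIndex]
    (hN : f.ker ≤ H) : H = ⊤ := by
  have hidx : (H.map f).FiniteIndex := by
    refine ⟨?_⟩
    rw [Subgroup.index_map_eq _ hf hN]
    exact Subgroup.FiniteIndex.index_ne_zero
  have h1 := h.eq_top (H.map f)
  rw [← Subgroup.comap_map_eq_self hN, h1, Subgroup.comap_top]

/-! ### Splitting the central extension -/

/-- Hopf's formula, transported from a free group to an arbitrary group `E` mapping onto `Q`. -/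
theorem mem_commutator_of_map_eq_one {E Q : Type} [Group E] [Group Q]
    (hH2 : SchurMultiplierTrivial Q) (p : E →* Q) (hp : Function.Surjective p)
    {c : E} (hc : c ∈ commutator E) (hpc : p c = 1) : c ∈ ⁅(⊤ : Subgroup E), p.ker⁆ := by
  let q : FreeGroup E →* E := FreeGroup.lift id
  have hq : Function.Surjective q := fun e => ⟨FreeGroup.of e, by simp [q]⟩
  have hH := hH2 E (p.comp q) (hp.comp hq)
  have hmap : (commutator (FreeGroup E)).map q = commutator E := by
    rw [commutator_def, commutator_def, Subgroup.map_commutator,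
      Subgroup.map_top_of_surjective q hq]
  rw [← hmap] at hc
  obtain ⟨w, hw, rfl⟩ := hc
  have h1 := Subgroup.mem_map_of_mem q (hH ⟨hpc, hw⟩)
  rw [Subgroup.map_commutator, Subgroup.map_top_of_surjective q hq] at h1
  refine Subgroup.commutator_mono le_rfl ?_ h1
  rintro _ ⟨y, hy, rfl⟩
  exact hy

/-- For a homomorphism `δ : G → F` and a subgroup `M` of `F`, the group of pairs `(g, a)` with
`a ∈ M` such that `δ g` and `a` conjugate `M` in the same way. -/
def innerLift {G F : Type} [Group G] [Group F] (δ : G →* F) (M : Subgroup F) :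
    Subgroup (G × F) where
  carrier := {x | x.2 ∈ M ∧ ∀ y ∈ M, δ x.1 * y * (δ x.1)⁻¹ = x.2 * y * x.2⁻¹}
  one_mem' := ⟨M.one_mem, by simp⟩
  mul_mem' := by
    rintro ⟨g, a⟩ ⟨h, b⟩ ⟨ha, ha'⟩ ⟨hb, hb'⟩
    refine ⟨M.mul_mem ha hb, fun y hy => ?_⟩
    have h1 := ha' (b * y * b⁻¹) (M.mul_mem (M.mul_mem hb hy) (M.inv_mem hb))
    have h2 := hb' y hy
    simp only at h1 h2 ⊢
    rw [← h2] at h1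
    simp only [Prod.mk_mul_mk, map_mul, mul_inv_rev]
    calc _ = δ g * (δ h * y * (δ h)⁻¹) * (δ g)⁻¹ := by group
      _ = a * (b * y * b⁻¹) * a⁻¹ := by rw [h1, h2]
      _ = _ := by group
  inv_mem' := by
    rintro ⟨g, a⟩ ⟨ha, ha'⟩
    refine ⟨M.inv_mem ha, fun y hy => ?_⟩
    have h1 := ha' (a⁻¹ * y * a) (M.mul_mem (M.mul_mem (M.inv_mem ha) hy) ha)
    simp only [Prod.fst_inv, Prod.snd_inv, map_inv, inv_inv] at h1 ⊢
    have h2 : y = δ g * (a⁻¹ * y * a) * (δ g)⁻¹ := by rw [h1]; group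
    calc _ = (δ g)⁻¹ * (δ g * (a⁻¹ * y * a) * (δ g)⁻¹) * δ g := by rw [← h2]
      _ = _ := by group

/-- If `α : ker f → F` is equivariant for conjugation through `δ`, and each `δ n` acts on the image
of `α` as `α n` does, then `α` extends to `A : G → F` with values in the image of `α`, such that
each `δ g` acts on that image as `A g` does. -/
theorem exists_extension {G Q : Type} [Group G] [Group Q] (hfg : Group.FG Q) (f : G →* Q)
    (hf : Function.Surjective f) (hQhat : ProfinitelyTrivial Q) (hH2 : SchurMultiplierTrivial Q)
    {F : Type} [Group F] [Finite F] (δ : G →* F) (α : f.ker →* F)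
    (hconj : ∀ (g : G) (n m : f.ker), (m : G) = g * n * g⁻¹ → δ g * α n * (δ g)⁻¹ = α m)
    (hinner : ∀ n : f.ker, ∀ y ∈ α.range, δ n * y * (δ n)⁻¹ = α n * y * (α n)⁻¹) :
    ∃ A : G →* F, (∀ n : f.ker, A n = α n) ∧
      ∀ g, A g ∈ α.range ∧ ∀ y ∈ α.range, δ g * y * (δ g)⁻¹ = A g * y * (A g)⁻¹ := by
  let E := innerLift δ α.range
  let pr : E →* G := (MonoidHom.fst G F).comp E.subtype
  have hE : ∀ e : E, (e : G × F).2 ∈ α.range ∧ ∀ y ∈ α.range,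
      δ (e : G × F).1 * y * (δ (e : G × F).1)⁻¹ = (e : G × F).2 * y * (e : G × F).2⁻¹ :=
    fun e => e.2
  -- `Ñ`, the graph of `α`, as the range of `s`
  let s : f.ker →* E :=
    { toFun := fun n => ⟨((n : G), α n), ⟨⟨n, rfl⟩, hinner n⟩⟩
      map_one' := by ext <;> simp
      map_mul' := fun a b => by ext <;> simp }
  have hpr : Function.Surjective pr := by
    have hker : f.ker ≤ pr.range := fun n hn => ⟨s ⟨n, hn⟩, rfl⟩
    have hδ : δ.ker ≤ pr.range := by
      intro g hg
      have hg1 : δ g = 1 := hg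
      exact ⟨⟨(g, 1), ⟨α.range.one_mem, fun y _ => by simp [hg1]⟩⟩, rfl⟩
    have : δ.ker.FiniteIndex := inferInstance
    have : pr.range.FiniteIndex := Subgroup.finiteIndex_of_le hδ
    exact MonoidHom.range_eq_top.1 (eq_top_of_ker_le hf hQhat _ hker)
  have hsnormal : s.range.Normal := by
    refine ⟨?_⟩
    rintro _ ⟨n, rfl⟩ e
    refine ⟨⟨pr e * n * (pr e)⁻¹, (inferInstance : f.ker.Normal).conj_mem _ n.2 _⟩, ?_⟩
    have h1 := hconj (pr e) n
      ⟨pr e * n * (pr e)⁻¹, (inferInstance : f.ker.Normal).conj_mem _ n.2 _⟩ rfl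
    have h2 := (hE e).2 (α n) ⟨n, rfl⟩
    apply Subtype.ext
    apply Prod.ext
    · rfl
    · exact h1.symm.trans h2
  -- the kernel of `pr` is central, so commutators with `ker (E → Q) = ker pr * Ñ` lie in `Ñ`
  have hcomm : ⁅(⊤ : Subgroup E), (f.comp pr).ker⁆ ≤ s.range := by
    rw [Subgroup.commutator_le]
    intro e _ k hk
    let n : f.ker := ⟨pr k, hk⟩
    obtain ⟨z, hz⟩ : ∃ z, k = z * s n := ⟨k * (s n)⁻¹, by group⟩
    have hz1 : pr z = 1 := by
      have h1 : pr k = pr z * pr (s n) := by rw [← map_mul, ← hz]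
      have h2 : pr (s n) = pr k := rfl
      rw [h2] at h1
      simpa using h1.symm
    have hz1' : (z : G × F).1 = 1 := hz1
    have hcen : e * z = z * e := by
      have h1 := (hE z).2 (e : G × F).2 (hE e).1
      rw [hz1'] at h1
      apply Subtype.ext
      apply Prod.ext
      · change (e : G × F).1 * (z : G × F).1 = (z : G × F).1 * (e : G × F).1
        simp [hz1']
      · change (e : G × F).2 * (z : G × F).2 = (z : G × F).2 * (e : G × F).2
        simp only [map_one, one_mul, inv_one, mul_one] at h1
        rw [eq_mul_inv_iff_mul_eq] at h1
        exact h1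
    have : ⁅e, k⁆ = z * ((e * s n * e⁻¹) * (s n)⁻¹) * z⁻¹ := by
      rw [hz, commutatorElement_def, mul_inv_rev, ← mul_assoc e z, hcen]
      group
    rw [this]
    exact hsnormal.conj_mem _ (s.range.mul_mem (hsnormal.conj_mem _ ⟨n, rfl⟩ _)
      (s.range.inv_mem ⟨n, rfl⟩)) _
  let S : Subgroup E := commutator E ⊔ s.range
  have hsS : ∀ n, s n ∈ S := fun n => Subgroup.mem_sup_right (MonoidHom.mem_range.2 ⟨n, rfl⟩)
  let t : S →* G := pr.comp S.subtype
  have htinj : Function.Injective t := by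
    rw [injective_iff_map_eq_one]
    rintro ⟨x, hx⟩ hx1
    have hx1' : pr x = 1 := hx1
    obtain ⟨c, hc, _, ⟨n, rfl⟩, rfl⟩ := Subgroup.mem_sup_of_normal_right.1 hx
    have hpc : (f.comp pr) c = 1 := by
      have h1 : f (pr (c * s n)) = 1 := by rw [hx1', map_one]
      have h2 : f (pr (s n)) = 1 := n.2
      rw [map_mul, map_mul, h2, mul_one] at h1
      exact h1
    obtain ⟨m, hm⟩ := hcomm (mem_commutator_of_map_eq_one hH2 (f.comp pr) (hf.comp hpr) hc hpc)
    rw [← hm, ← map_mul] at hx1'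
    have h3 : m * n = 1 := Subtype.ext hx1'
    apply Subtype.ext
    change c * s n = 1
    rw [← hm, ← map_mul, h3, map_one]
  have htsurj : Function.Surjective t := by
    intro g
    have hmap : (commutator E).map (f.comp pr) = ⊤ := by
      rw [commutator_def, Subgroup.map_commutator,
        Subgroup.map_top_of_surjective (f.comp pr) (hf.comp hpr), ← commutator_def,
        commutator_eq_top hfg hQhat]
    obtain ⟨c, hc, hcg⟩ : f g ∈ (commutator E).map (f.comp pr) := hmap ▸ Subgroup.mem_top _
    have hcg' : f (pr c) = f g := hcg
    let n : f.ker := ⟨(pr c)⁻¹ * g, by simp [MonoidHom.mem_ker, hcg']⟩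
    refine ⟨⟨c * s n, S.mul_mem (Subgroup.mem_sup_left hc) (hsS n)⟩, ?_⟩
    change pr (c * s n) = g
    rw [map_mul]
    change pr c * ((pr c)⁻¹ * g) = g
    group
  let T : S ≃* G := MulEquiv.ofBijective t ⟨htinj, htsurj⟩
  have hT : ∀ g, ((T.symm g : E) : G × F).1 = g := fun g => T.apply_symm_apply g
  refine ⟨((MonoidHom.snd G F).comp (E.subtype.comp S.subtype)).comp T.symm.toMonoidHom, ?_, ?_⟩
  · intro n
    have : T.symm (n : G) = ⟨s n, hsS n⟩ := by
      rw [MulEquiv.symm_apply_eq]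
      rfl
    change ((T.symm (n : G) : E) : G × F).2 = α n
    rw [this]
    rfl
  · intro g
    have h := hE (T.symm g : E)
    rw [hT g] at h
    exact h

/-! ### Restriction to the fibre product -/

theorem restrict_injective {G Q : Type} [Group G] [Group Q] (f : G →* Q)
    (hf : Function.Surjective f) (hQhat : ProfinitelyTrivial Q)
    (F : Type) [Group F] [Finite F] :
    Function.Injective (fun φ : (G × G) →* F => φ.comp (fiberProduct f).subtype) := by
  intro φ φ' h
  have hP : ∀ g k : G, f g = f k → φ (g, k) = φ' (g, k) := fun g k hgk =>
    DFunLike.congr_fun h (⟨(g, k), hgk⟩ : fiberProduct f)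
  let a := φ.comp (MonoidHom.inl G G)
  let a' := φ'.comp (MonoidHom.inl G G)
  have hfin : (a.eqLocus a').FiniteIndex := by
    have : (a.ker ⊓ a'.ker).FiniteIndex := inferInstance
    refine Subgroup.finiteIndex_of_le (H := a.ker ⊓ a'.ker) ?_
    rintro x ⟨h1, h2⟩
    exact (show a x = 1 from h1).trans (show a' x = 1 from h2).symm
  have htop : a.eqLocus a' = ⊤ := eq_top_of_ker_le hf hQhat _ fun n hn =>
    hP n 1 (by rw [map_one]; exact hn)
  ext ⟨g, k⟩
  have h1 : φ (g * k⁻¹, 1) = φ' (g * k⁻¹, 1) :=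
    (htop ▸ Subgroup.mem_top (g * k⁻¹) : g * k⁻¹ ∈ a.eqLocus a')
  have h2 : ((g, k) : G × G) = (g * k⁻¹, 1) * (k, k) := by simp
  rw [h2, map_mul, map_mul, h1, hP k k rfl]

/-- **Theorem (Platonov–Tavgen / Bridson–Grunewald, part 2).** If `f : G → Q` is a
surjective homomorphism with `G` finitely generated, `Q` finitely presented, `Q̂ = 1`
and `H₂(Q,ℤ) = 0`, then the inclusion of the fibre product `P ↪ G × G` induces an
isomorphism of profinite completions: for every finite group `F`, restriction
`Hom(G × G, F) → Hom(P, F)` is a bijection. -/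
theorem fiberProduct_inclusion_induces_profinite_iso
    (G Q : Type) [Group G] [Group Q]
    (hG : Group.FG G) (hQ : FinitelyPresented Q)
    (f : G →* Q) (hf : Function.Surjective f)
    (hQhat : ProfinitelyTrivial Q) (hH2 : SchurMultiplierTrivial Q) :
    ∀ (F : Type) [Group F] [Finite F],
      Function.Bijective (fun φ : (G × G) →* F => φ.comp (fiberProduct f).subtype) := by
  intro F _ _
  refine ⟨restrict_injective f hf hQhat F, fun ψ => ?_⟩
  let δ : G →* F := ψ.comp
    { toFun := fun g => ⟨(g, g), rfl⟩
      map_one' := rfl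
      map_mul' := fun _ _ => rfl }
  let α : f.ker →* F := ψ.comp
    { toFun := fun n => ⟨((n : G), 1), by
        change f n = f 1
        rw [map_one]; exact n.2⟩
      map_one' := rfl
      map_mul' := fun a b => by
        apply Subtype.ext
        apply Prod.ext
        · rfl
        · exact (mul_one 1).symm }
  have hconj : ∀ (g : G) (n m : f.ker), (m : G) = g * n * g⁻¹ →
      δ g * α n * (δ g)⁻¹ = α m := by
    intro g n m hm
    simp only [δ, α, MonoidHom.comp_apply]
    rw [← map_mul, ← map_inv, ← map_mul]
    congr 1
    apply Subtype.ext
    apply Prod.ext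
    · exact hm.symm
    · change g * 1 * g⁻¹ = 1
      simp
  have hinner : ∀ n : f.ker, ∀ y ∈ α.range, δ n * y * (δ n)⁻¹ = α n * y * (α n)⁻¹ := by
    rintro n _ ⟨m, rfl⟩
    rw [hconj n m (n * m * n⁻¹) rfl, map_mul, map_mul, map_inv]
  obtain ⟨A, hA, hA'⟩ := exists_extension hQ.fg f hf hQhat hH2 δ α hconj hinner
  -- `B g = (A g)⁻¹ * δ g` centralises the image of `α`, which contains every `A h`
  have hBc : ∀ g, ∀ y ∈ α.range, Commute ((A g)⁻¹ * δ g) y := by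
    intro g y hy
    have h1 := (hA' g).2 y hy
    rw [mul_inv_eq_iff_eq_mul] at h1
    change (A g)⁻¹ * δ g * y = y * ((A g)⁻¹ * δ g)
    rw [mul_assoc, h1]
    group
  let B : G →* F :=
    { toFun := fun g => (A g)⁻¹ * δ g
      map_one' := by simp
      map_mul' := fun g h => by
        have h1 := hBc g (A h)⁻¹ (α.range.inv_mem (hA' h).1)
        rw [map_mul, map_mul, mul_inv_rev]
        calc _ = (A h)⁻¹ * ((A g)⁻¹ * δ g) * δ h := by group
          _ = _ := by rw [← h1.eq]; group }
  refine ⟨A.noncommCoprod B fun g h => (hBc h (A g) (hA' g).1).symm, ?_⟩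
  ext ⟨⟨g, h⟩, hgh⟩
  have hgh' : f g = f h := hgh
  let n : f.ker := ⟨g * h⁻¹, by simp [MonoidHom.mem_ker, hgh']⟩
  have hn : g = n * h := by simp [n]
  change A g * ((A h)⁻¹ * δ h) = ψ ⟨(g, h), hgh⟩
  have hAg : A g = α n * A h := by rw [← hA, ← map_mul, ← hn]
  rw [hAg, mul_assoc, mul_inv_cancel_left]
  simp only [δ, α, MonoidHom.comp_apply]
  rw [← map_mul]
  congr 1
  apply Subtype.ext
  apply Prod.ext
  · exact hn.symm
  · exact one_mul h
end

section
/- Let B be a finitely generated group and let Z ≤ B be a central subgroup such that the quotient group B/Z is finitely presented. Then Z is finitely generated. -/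
/-- **Lemma.** Let `B` be a finitely generated group and `Z ≤ B` a central subgroup
(realised as the kernel of a surjection `π : B → C` onto a group `C ≅ B/Z`). If the
quotient `C` is finitely presented, then `Z` is finitely generated. -/
theorem central_kernel_fg_of_fp_quotient
    (B C : Type*) [Group B] [Group C]
    (hB : Group.FG B)
    (π : B →* C) (hsurj : Function.Surjective π)
    (hcentral : MonoidHom.ker π ≤ Subgroup.center B)
    (hC : FinitelyPresented C) :
    (MonoidHom.ker π).FG := by
  obtain ⟨n, rels, ⟨e⟩⟩ := hC
  obtain ⟨S, hS, hSfin⟩ := Group.fg_iff.mp hB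
  let q : FreeGroup (Fin n) →* C := e.symm.toMonoidHom.comp (PresentedGroup.mk _)
  have hq : Function.Surjective q :=
    e.symm.surjective.comp (QuotientGroup.mk'_surjective _)
  have hker : ∀ x, q x = 1 → x ∈ Subgroup.normalClosure (rels : Set (FreeGroup (Fin n))) := by
    intro x hx
    have h : PresentedGroup.mk (rels : Set (FreeGroup (Fin n))) x = 1 :=
      e.symm.map_eq_one_iff.mp hx
    exact (QuotientGroup.eq_one_iff x).mp h
  have hrel : ∀ r ∈ rels, q r = 1 := by
    intro r hr
    have h : PresentedGroup.mk (rels : Set (FreeGroup (Fin n))) r = 1 :=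
      PresentedGroup.one_of_mem hr
    exact e.symm.map_eq_one_iff.mpr h
  choose b hb using fun i : Fin n => hsurj (q (FreeGroup.of i))
  let φ : FreeGroup (Fin n) →* B := FreeGroup.lift b
  have hφ : ∀ x, π (φ x) = q x := by
    have h : π.comp φ = q := FreeGroup.ext_hom _ _ fun i => by simp [φ, hb]
    exact fun x => DFunLike.congr_fun h x
  choose w hw using fun s : B => hq (π s)
  let T : Set B := (fun s => s * (φ (w s))⁻¹) '' S ∪ φ '' (rels : Set (FreeGroup (Fin n)))
  have hTfin : T.Finite := (hSfin.image _).union (rels.finite_toSet.image _)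
  have hle : Subgroup.closure T ≤ π.ker := by
    rw [Subgroup.closure_le]
    rintro _ (⟨s, -, rfl⟩ | ⟨r, hr, rfl⟩)
    · simp [MonoidHom.mem_ker, hφ, hw]
    · exact (hφ r).trans (hrel r hr)
  have hnormal : (Subgroup.closure T).Normal := ⟨fun z hz g => by
    rw [Subgroup.mem_center_iff.mp (hcentral (hle hz)) g]
    simpa using hz⟩
  have htop : Subgroup.closure T ⊔ φ.range = ⊤ := by
    rw [eq_top_iff, ← hS, Subgroup.closure_le]
    intro s hs
    have h := Subgroup.mul_mem_sup (T := φ.range)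
      (Subgroup.subset_closure (Or.inl ⟨s, hs, rfl⟩) : s * (φ (w s))⁻¹ ∈ Subgroup.closure T)
      (⟨w s, rfl⟩ : φ (w s) ∈ φ.range)
    simpa using h
  have hN : Subgroup.normalClosure (rels : Set (FreeGroup (Fin n)))
      ≤ (Subgroup.closure T).comap φ :=
    Subgroup.normalClosure_le_normal fun r hr =>
      Subgroup.subset_closure (Or.inr ⟨r, hr, rfl⟩)
  refine (Subgroup.fg_iff _).mpr ⟨T, le_antisymm hle fun z hz => ?_, hTfin⟩
  obtain ⟨z₀, hz₀, _, ⟨x, rfl⟩, rfl⟩ :=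
    Subgroup.mem_sup_of_normal_left.mp (htop ▸ Subgroup.mem_top z)
  have hx : q x = 1 := by
    have h := MonoidHom.mem_ker.mp hz
    rwa [map_mul, MonoidHom.mem_ker.mp (hle hz₀), one_mul, hφ] at h
  exact mul_mem hz₀ (hN (hker x hx))
end

section
/- Let G be a finitely generated residually finite group, let G₀ ⊴ G be a normal subgroup with G/G₀ finite, and let S ⊴ G be a finitely generated normal subgroup whose image in G/G₀ generates G/G₀ (equivalently S·G₀ = G). Suppose P₀ ≤ G₀ is a finitely generated subgroup such that the inclusion P₀ ↪ G₀ induces an isomorphism of profinite completions, and suppose S ∩ G₀ ⊆ P₀. Let P = ⟨P₀ ∪ S⟩ ≤ G. Then the inclusion P ↪ G induces an isomorphism of profinite completions. -/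
/-!
Uniqueness of an extension is immediate, since `S` and `G₀` generate `G` and a homomorphism on
`G₀` into a finite group is determined by its restriction to `P₀`.

For existence, let `θ : P → F` with `F` finite, `σ = θ|S`, and let `α : G₀ → F` be the extension of
`θ|P₀`. The extension of `θ` to `G = S·G₀` must be `s * h ↦ σ s * α h`. It is well defined because
`σ` and `α` agree on `S ∩ G₀ ⊆ P₀` (`exists_hom_of_compatible`). It is multiplicative once
`α (s⁻¹ * h * s) = (σ s)⁻¹ * α h * σ s` for `s ∈ S`, `h ∈ G₀`. For fixed `s` both sides are
homomorphisms in `h`, so it is enough to compare them on `P₀`; there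
`s⁻¹ * h * s = h * (h⁻¹ * s⁻¹ * h * s)` lies in `P₀`, because the commutator lies in
`S ∩ G₀ ⊆ P₀`, and the identity is that of `θ`.
-/

/-- A group is residually finite if every nontrivial element survives in some finite
quotient. -/
def ResiduallyFinite (G : Type*) [Group G] : Prop :=
  ∀ g : G, g ≠ 1 → ∃ (F : Type) (_ : Group F) (_ : Finite F) (φ : G →* F), φ g ≠ 1

/-- A homomorphism `ι : P →* G` induces an isomorphism of profinite completions if for
every finite group `F`, composition with `ι` is a bijection `Hom(G,F) → Hom(P,F)`. -/
def InducesProfiniteIso {P G : Type*} [Group P] [Group G] (ι : P →* G) : Prop :=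
  ∀ (F : Type) [Group F] [Finite F], Function.Bijective (fun φ : G →* F => φ.comp ι)

/-- Homomorphisms on `S` and on a normal subgroup `N` with `S·N = G` glue to `G` if they agree on
`S ∩ N` and are compatible with the conjugation action of `S` on `N`. -/
lemma exists_hom_of_compatible {G F : Type*} [Group G] [Group F] (S N : Subgroup G)
    (hN : N.Normal) (hgen : S ⊔ N = ⊤) (σ : S →* F) (α : N →* F)
    (hagree : ∀ (x : G) (hS : x ∈ S) (hx : x ∈ N), σ ⟨x, hS⟩ = α ⟨x, hx⟩)
    (hconj : ∀ (s : S) (h h' : N), (h' : G) = (s : G)⁻¹ * h * s → α h' = (σ s)⁻¹ * α h * σ s) :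
    ∃ φ : G →* F, (∀ s : S, φ s = σ s) ∧ ∀ h : N, φ h = α h := by
  have hdec : ∀ g : G, ∃ (s : S) (h : N), (s : G) * h = g := fun g => by
    have hg : g ∈ S ⊔ N := hgen ▸ Subgroup.mem_top g
    obtain ⟨s, hs, h, hh, rfl⟩ := Subgroup.mem_sup_of_normal_right.1 hg
    exact ⟨⟨s, hs⟩, ⟨h, hh⟩, rfl⟩
  choose a b hab using hdec
  have key : ∀ (s : S) (h : N), σ (a (s * h)) * α (b (s * h)) = σ s * α h := by
    intro s h
    have e := hab ((s : G) * h)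
    generalize a ((s : G) * h) = s' at e ⊢
    generalize b ((s : G) * h) = h' at e ⊢
    have e' : (s : G)⁻¹ * s' = h * (h' : G)⁻¹ := by
      rw [inv_mul_eq_iff_eq_mul, ← mul_assoc, ← e, mul_inv_cancel_right]
    have h1 := hagree ((s⁻¹ * s' : S) : G) (s⁻¹ * s').2
      (by simpa [e'] using (h * h'⁻¹ : N).2)
    have h2 : σ (s⁻¹ * s') = α (h * h'⁻¹) := h1.trans (congrArg α (Subtype.ext e'))
    rw [map_mul, map_mul, map_inv, map_inv, inv_mul_eq_iff_eq_mul, ← mul_assoc,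
      eq_mul_inv_iff_mul_eq] at h2
    exact h2
  refine ⟨MonoidHom.mk' (fun g => σ (a g) * α (b g)) fun x y => ?_, fun s => ?_, fun h => ?_⟩
  · let c : N := ⟨(a y : G)⁻¹ * b x * a y, by simpa using hN.conj_mem _ (b x).2 (a y : G)⁻¹⟩
    have hc := hconj (a y) (b x) c rfl
    have hxy : x * y = ((a x * a y : S) : G) * ((c * b y : N) : G) := by
      conv_lhs => rw [← hab x, ← hab y]
      simp only [c, Subgroup.coe_mul]
      group
    change σ (a (x * y)) * α (b (x * y)) = _
    rw [hxy, key, map_mul, map_mul, hc]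
    group
  · simpa using key s 1
  · simpa using key 1 h

/-- **Lemma (promoting Grothendieck pairs to finite extensions).** Let `G` be a finitely
generated residually finite group, `G₀ ⊴ G` a normal subgroup of finite index, and
`S ⊴ G` a finitely generated normal subgroup with `S·G₀ = G`. If `P₀ ≤ G₀` is a finitely
generated subgroup such that `P₀ ↪ G₀` induces an isomorphism of profinite completions,
and `S ∩ G₀ ⊆ P₀`, then `P = ⟨P₀, S⟩ ↪ G` also induces an isomorphism of profinite
completions. -/
theorem grothendieck_pair_of_finite_extension
    (G : Type*) [Group G] (hfg : Group.FG G) (hrf : ResiduallyFinite G)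
    (G₀ : Subgroup G) (hG₀n : G₀.Normal) (hG₀fi : G₀.FiniteIndex)
    (S : Subgroup G) (hSn : S.Normal) (hSfg : S.FG) (hgen : S ⊔ G₀ = ⊤)
    (P₀ : Subgroup G) (hP₀le : P₀ ≤ G₀) (hP₀fg : P₀.FG)
    (hGP : InducesProfiniteIso (Subgroup.inclusion hP₀le))
    (hSG₀ : S ⊓ G₀ ≤ P₀) :
    InducesProfiniteIso (P₀ ⊔ S).subtype := by
  intro F _ _
  obtain ⟨hinj, hsurj⟩ := hGP F
  constructor
  · intro φ ψ hφψ
    have hP : ∀ x (hx : x ∈ P₀ ⊔ S), φ x = ψ x := fun x hx => DFunLike.congr_fun hφψ ⟨x, hx⟩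
    have h₀ : φ.comp G₀.subtype = ψ.comp G₀.subtype :=
      hinj (MonoidHom.ext fun x => hP x (le_sup_left (a := P₀) x.2))
    have hle : S ⊔ G₀ ≤ φ.eqLocus ψ :=
      sup_le (fun s hs => hP s (le_sup_right (a := P₀) hs)) fun g hg =>
        show φ g = ψ g from DFunLike.congr_fun h₀ (⟨g, hg⟩ : G₀)
    exact MonoidHom.ext fun g => hle (hgen ▸ Subgroup.mem_top g)
  · intro θ
    obtain ⟨α, hα⟩ := hsurj (θ.comp (Subgroup.inclusion le_sup_left))
    have hαP : ∀ x (hx : x ∈ P₀), α ⟨x, hP₀le hx⟩ = θ ⟨x, le_sup_left (a := P₀) hx⟩ :=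
      fun x hx => DFunLike.congr_fun hα ⟨x, hx⟩
    let σ : S →* F := θ.comp (Subgroup.inclusion le_sup_right)
    have hconj : ∀ (s : S) (h h' : G₀), (h' : G) = (s : G)⁻¹ * h * s →
        α h' = (σ s)⁻¹ * α h * σ s := by
      intro s h h' hh'
      -- Both sides as homomorphisms in `h`: conjugate by `s⁻¹` in `G₀`, by `(σ s)⁻¹` in `F`.
      have heq : α.comp (MulAut.conjNormal (s : G)⁻¹).toMonoidHom =
          (MulAut.conj (σ s)⁻¹).toMonoidHom.comp α := by
        refine hinj (MonoidHom.ext fun p => ?_)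
        have hcomm : (p : G)⁻¹ * ((s : G)⁻¹ * p * s) ∈ P₀ := by
          refine hSG₀ ⟨?_, ?_⟩
          · have h1 := S.mul_mem (hSn.conj_mem _ (S.inv_mem s.2) (p : G)⁻¹) s.2
            simpa [mul_assoc] using h1
          · have h1 := hG₀n.conj_mem _ (hP₀le p.2) (s : G)⁻¹
            exact G₀.mul_mem (G₀.inv_mem (hP₀le p.2)) (by simpa using h1)
        have hmem : (s : G)⁻¹ * p * s ∈ P₀ := by simpa using P₀.mul_mem p.2 hcomm
        have e1 : (MulAut.conjNormal (s : G)⁻¹) (Subgroup.inclusion hP₀le p) =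
            ⟨(s : G)⁻¹ * p * s, hP₀le hmem⟩ := Subtype.ext (by simp)
        have e2 : α (Subgroup.inclusion hP₀le p) = θ ⟨p, le_sup_left (a := P₀) p.2⟩ :=
          hαP p p.2
        change α ((MulAut.conjNormal (s : G)⁻¹) (Subgroup.inclusion hP₀le p)) =
          MulAut.conj (σ s)⁻¹ (α (Subgroup.inclusion hP₀le p))
        rw [e1, e2, hαP _ hmem, MulAut.conj_apply, inv_inv]
        change _ = (θ _)⁻¹ * _ * θ _
        rw [← map_inv, ← map_mul, ← map_mul]
        rfl
      have h1 := DFunLike.congr_fun heq h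
      have e : MulAut.conjNormal (s : G)⁻¹ h = h' := Subtype.ext (by simp [hh'])
      change α (MulAut.conjNormal (s : G)⁻¹ h) = MulAut.conj (σ s)⁻¹ (α h) at h1
      rw [e, MulAut.conj_apply, inv_inv] at h1
      exact h1
    obtain ⟨φ, hφS, hφG⟩ := exists_hom_of_compatible S G₀ hG₀n hgen σ α
      (fun x hS hx => (hαP x (hSG₀ ⟨hS, hx⟩)).symm) hconj
    refine ⟨φ, MonoidHom.ext ?_⟩
    -- `φ` and `θ` agree on the generating subgroups `P₀` and `S` of `P`.
    rintro ⟨x, hx⟩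
    obtain ⟨p, hp, s, hs, rfl⟩ := Subgroup.mem_sup_of_normal_right.1 hx
    change φ (p * s) = _
    rw [map_mul, hφG ⟨p, hP₀le hp⟩, hφS ⟨s, hs⟩, hαP p hp]
    exact (map_mul θ _ _).symm
end

section
/- Let Δ be a group such that (i) the centraliser in Δ of every nontrivial element is virtually abelian, and (ii) no infinite normal subgroup of Δ is virtually abelian. For i = 1, 2 let p_i : Δ → Q_i be a surjective homomorphism with infinite kernel, and let P_i = {(x,y) ∈ Δ×Δ : p_i(x) = p_i(y)} be the fibre product. If P₁ ≅ P₂, then Q₁ ≅ Q₂. -/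
/-- A group is virtually abelian if it has an abelian subgroup of finite index. -/
def VirtuallyAbelian (G : Type*) [Group G] : Prop :=
  ∃ H : Subgroup G, H.FiniteIndex ∧ ∀ a ∈ H, ∀ b ∈ H, a * b = b * a

theorem VirtuallyAbelian.of_injective {G H : Type*} [Group G] [Group H]
    (hH : VirtuallyAbelian H) (f : G →* H) (hf : Function.Injective f) :
    VirtuallyAbelian G := by
  obtain ⟨A, hA, hab⟩ := hH
  refine ⟨A.comap f, ⟨?_⟩, fun a ha b hb => hf ?_⟩
  · rw [Subgroup.index_comap]
    exact fun h => hA.index_ne_zero (Subgroup.index_eq_zero_of_relIndex_eq_zero h)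
  rw [map_mul, map_mul]
  exact hab _ ha _ hb

theorem VirtuallyAbelian.prod {G H : Type*} [Group G] [Group H]
    (hG : VirtuallyAbelian G) (hH : VirtuallyAbelian H) : VirtuallyAbelian (G × H) := by
  obtain ⟨A, hA, hab⟩ := hG
  obtain ⟨B, hB, hbb⟩ := hH
  refine ⟨A.prod B, ⟨?_⟩, fun a ha b hb => Prod.ext (hab _ ha.1 _ hb.1) (hbb _ ha.2 _ hb.2)⟩
  rw [Subgroup.index_prod]
  exact mul_ne_zero hA.index_ne_zero hB.index_ne_zero

/-- The elements of `G` whose centraliser is not virtually abelian. -/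
def largeCentralizer (G : Type*) [Group G] : Set G :=
  {z | ¬ VirtuallyAbelian ↥(Subgroup.centralizer ({z} : Set G))}

theorem map_mem_largeCentralizer {G H : Type*} [Group G] [Group H] (e : G ≃* H) {z : G}
    (hz : z ∈ largeCentralizer G) : e z ∈ largeCentralizer H := by
  intro hva
  refine hz (hva.of_injective
    ((e.toMonoidHom.comp (Subgroup.subtype _)).codRestrict _ ?_) ?_)
  · rintro ⟨g, hg⟩
    rw [Subgroup.mem_centralizer_singleton_iff] at hg ⊢
    simpa using congrArg e hg
  · intro a b hab
    exact Subtype.ext (e.injective (congrArg Subtype.val hab))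

theorem image_largeCentralizer {G H : Type*} [Group G] [Group H] (e : G ≃* H) :
    Set.image e (largeCentralizer G) = largeCentralizer H := by
  ext z
  constructor
  · rintro ⟨w, hw, rfl⟩
    exact map_mem_largeCentralizer e hw
  · intro hz
    exact ⟨e.symm z, map_mem_largeCentralizer e.symm hz, e.apply_symm_apply z⟩

/-- The common value `p x = p y` at a point `(x, y)` of the fibre product. -/
def fiberProductProj {Δ Q : Type*} [Group Δ] [Group Q] (p : Δ →* Q) : ↥(fiberProduct p) →* Q :=
  p.comp ((MonoidHom.fst Δ Δ).comp (fiberProduct p).subtype)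

theorem fiberProductProj_surjective {Δ Q : Type*} [Group Δ] [Group Q] (p : Δ →* Q)
    (h : Function.Surjective p) : Function.Surjective (fiberProductProj p) := by
  intro q
  obtain ⟨x, rfl⟩ := h q
  exact ⟨⟨(x, x), rfl⟩, rfl⟩

theorem mem_largeCentralizer_iff {Δ Q : Type*} [Group Δ] [Group Q]
    (hcent : ∀ x : Δ, x ≠ 1 → VirtuallyAbelian ↥(Subgroup.centralizer ({x} : Set Δ)))
    (hnorm : ∀ N : Subgroup Δ, N.Normal → Infinite ↥N → ¬ VirtuallyAbelian ↥N)
    (p : Δ →* Q) (hk : Infinite ↥(MonoidHom.ker p)) (z : ↥(fiberProduct p)) :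
    z ∈ largeCentralizer ↥(fiberProduct p) ↔ z.1.1 = 1 ∨ z.1.2 = 1 := by
  have hN := hnorm p.ker inferInstance hk
  obtain ⟨⟨x, y⟩, hz⟩ := z
  constructor
  · intro hlarge
    by_contra! hne
    refine hlarge (((hcent x hne.1).prod (hcent y hne.2)).of_injective
      (MonoidHom.prod
        (((MonoidHom.fst Δ Δ).comp ((fiberProduct p).subtype.comp
          (Subgroup.subtype _))).codRestrict _ ?_)
        (((MonoidHom.snd Δ Δ).comp ((fiberProduct p).subtype.comp
          (Subgroup.subtype _))).codRestrict _ ?_)) ?_)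
    · rintro ⟨g, hg⟩
      rw [Subgroup.mem_centralizer_singleton_iff] at hg ⊢
      exact congrArg (fun w => w.1.1) hg
    · rintro ⟨g, hg⟩
      rw [Subgroup.mem_centralizer_singleton_iff] at hg ⊢
      exact congrArg (fun w => w.1.2) hg
    · intro a b hab
      exact Subtype.ext (Subtype.ext (Prod.ext
        (congrArg (fun w => w.1.1) hab) (congrArg (fun w => w.2.1) hab)))
  · rintro (h | h) hva
    · obtain rfl : x = 1 := h
      -- `N × 1` centralises `(1, y)`
      refine hN (hva.of_injective
        ((((MonoidHom.inl Δ Δ).comp p.ker.subtype).codRestrict (fiberProduct p)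
          fun n => ?_).codRestrict _ fun n => ?_) ?_)
      · change p n.1 = p 1
        rw [map_one]
        exact n.2
      · rw [Subgroup.mem_centralizer_singleton_iff]
        exact Subtype.ext (Prod.ext (by simp) (by simp))
      · intro a b hab
        exact Subtype.ext (congrArg (fun w => w.1.1.1) hab)
    · obtain rfl : y = 1 := h
      -- `1 × N` centralises `(x, 1)`
      refine hN (hva.of_injective
        ((((MonoidHom.inr Δ Δ).comp p.ker.subtype).codRestrict (fiberProduct p)
          fun n => ?_).codRestrict _ fun n => ?_) ?_)
      · change p 1 = p n.1
        rw [map_one]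
        exact n.2.symm
      · rw [Subgroup.mem_centralizer_singleton_iff]
        exact Subtype.ext (Prod.ext (by simp) (by simp))
      · intro a b hab
        exact Subtype.ext (congrArg (fun w => w.1.1.2) hab)

/-- The kernel `N × N` of `P → Q` is characteristic: it is generated by the elements of `P`
whose centraliser is not virtually abelian. -/
theorem closure_largeCentralizer {Δ Q : Type*} [Group Δ] [Group Q]
    (hcent : ∀ x : Δ, x ≠ 1 → VirtuallyAbelian ↥(Subgroup.centralizer ({x} : Set Δ)))
    (hnorm : ∀ N : Subgroup Δ, N.Normal → Infinite ↥N → ¬ VirtuallyAbelian ↥N)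
    (p : Δ →* Q) (hk : Infinite ↥(MonoidHom.ker p)) :
    Subgroup.closure (largeCentralizer ↥(fiberProduct p)) = (fiberProductProj p).ker := by
  apply le_antisymm
  · rw [Subgroup.closure_le]
    intro z hz
    have hzp : p z.1.1 = p z.1.2 := z.2
    change p z.1.1 = 1
    rcases (mem_largeCentralizer_iff hcent hnorm p hk z).1 hz with h | h
    · rw [h, map_one]
    · rw [hzp, h, map_one]
  · rintro ⟨⟨x, y⟩, hxy⟩ hz
    have hx : p x = 1 := hz
    have hy : p y = 1 := (show p x = p y from hxy).symm.trans hx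
    have hl : (x, (1 : Δ)) ∈ fiberProduct p := show p x = p 1 by rw [hx, map_one]
    have hr : ((1 : Δ), y) ∈ fiberProduct p := show p 1 = p y by rw [hy, map_one]
    have hmul : (⟨(x, y), hxy⟩ : ↥(fiberProduct p)) = ⟨(x, 1), hl⟩ * ⟨(1, y), hr⟩ :=
      Subtype.ext (Prod.ext (by simp) (by simp))
    rw [hmul]
    exact mul_mem
      (Subgroup.subset_closure ((mem_largeCentralizer_iff hcent hnorm p hk _).2 (Or.inr rfl)))
      (Subgroup.subset_closure ((mem_largeCentralizer_iff hcent hnorm p hk _).2 (Or.inl rfl)))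

/-- **Lemma.** Let `Δ` be a group in which (i) the centraliser of every nontrivial
element is virtually abelian and (ii) no infinite normal subgroup is virtually abelian.
For `i = 1,2` let `pᵢ : Δ → Qᵢ` be surjections with infinite kernel and let
`Pᵢ ≤ Δ × Δ` be the corresponding fibre products. If `P₁ ≅ P₂` then `Q₁ ≅ Q₂`. -/
theorem quotients_iso_of_fiber_products_iso
    (Δ Q₁ Q₂ : Type*) [Group Δ] [Group Q₁] [Group Q₂]
    (hcent : ∀ x : Δ, x ≠ 1 → VirtuallyAbelian ↥(Subgroup.centralizer ({x} : Set Δ)))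
    (hnorm : ∀ N : Subgroup Δ, N.Normal → Infinite ↥N → ¬ VirtuallyAbelian ↥N)
    (p₁ : Δ →* Q₁) (h₁ : Function.Surjective p₁) (hk₁ : Infinite ↥(MonoidHom.ker p₁))
    (p₂ : Δ →* Q₂) (h₂ : Function.Surjective p₂) (hk₂ : Infinite ↥(MonoidHom.ker p₂))
    (hiso : Nonempty (↥(fiberProduct p₁) ≃* ↥(fiberProduct p₂))) :
    Nonempty (Q₁ ≃* Q₂) := by
  obtain ⟨e⟩ := hiso
  have hker : (fiberProductProj p₁).ker.map (e : _ →* _) = (fiberProductProj p₂).ker := by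
    rw [← closure_largeCentralizer hcent hnorm p₁ hk₁,
      ← closure_largeCentralizer hcent hnorm p₂ hk₂, MonoidHom.map_closure]
    exact congrArg _ (image_largeCentralizer e)
  exact ⟨(QuotientGroup.quotientKerEquivOfSurjective _ (fiberProductProj_surjective p₁ h₁)).symm.trans
    ((QuotientGroup.congr _ _ e hker).trans
      (QuotientGroup.quotientKerEquivOfSurjective _ (fiberProductProj_surjective p₂ h₂)))⟩
end

section
/- Let Π be a group whose abelianization is finite of odd order, and let τ be an automorphism of Π with τ∘τ = id such that τ(x)·x ∈ [Π,Π] for every x ∈ Π (i.e. τ induces inversion on the abelianization of Π). Let Λ = Π ⋊_τ C₂ be the semidirect product of Π by the cyclic group of order 2 acting via τ. Then the commutator subgroup of Λ equals Π (identified with Π × {1} ≤ Λ), and the abelianization of Λ is cyclic of order 2. -/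
/-!
In the abelianization of `Λ = P ⋊ C`, an element `x` of `P` has the same image as its conjugate
`τ x`, while `τ x * x ∈ [P, P]` says that these images are mutually inverse; so the image of `x`
squares to `1`. It is also killed by the odd number `|P/[P, P]|`, hence it is trivial, which gives
`P ≤ [Λ, Λ]`. The reverse inclusion holds because `Λ / P ≅ C` has order two and is thus abelian,
and the abelianization of `Λ` is then `Λ / P ≅ C`.
-/

/-- **Lemma.** Let `P` (the group `Π` of the paper) be a group whose abelianization is
finite of odd order and let `τ` be an involutive automorphism of `P` inducing inversion
on the abelianization (`τ(x)·x ∈ [P,P]` for all `x`). Let `C` be a (the) cyclic group of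
order 2 acting on `P` via `τ`, and let `Λ = P ⋊_τ C`. Then `[Λ,Λ]` is exactly the
canonical copy of `P` in `Λ`, and the abelianization of `Λ` is cyclic of order 2. -/
theorem commutator_of_semidirect_product_by_inverting_involution
    (P C : Type*) [Group P] [Group C]
    (hfin : Finite (Abelianization P)) (hodd : Odd (Nat.card (Abelianization P)))
    (τ : MulAut P) (hτ : ∀ x, τ (τ x) = x)
    (hinv : ∀ x : P, τ x * x ∈ commutator P)
    (hC : Nat.card C = 2)
    (φ : C →* MulAut P) (hφ : ∀ c : C, c ≠ 1 → φ c = τ) :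
    commutator (P ⋊[φ] C) =
      MonoidHom.range (SemidirectProduct.inl : P →* P ⋊[φ] C) ∧
    IsCyclic (Abelianization (P ⋊[φ] C)) ∧
    Nat.card (Abelianization (P ⋊[φ] C)) = 2 := by
  have : Fact (Nat.Prime 2) := ⟨Nat.prime_two⟩
  have hcyc : IsCyclic C := isCyclic_of_prime_card hC
  have hcomm : ∀ a b : C, a * b = b * a := hcyc.isMulCommutative.is_comm.comm
  have hker := SemidirectProduct.range_inl_eq_ker_rightHom (φ := φ)
  have heq : commutator (P ⋊[φ] C) =
      MonoidHom.range (SemidirectProduct.inl : P →* P ⋊[φ] C) := by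
    apply le_antisymm
    · rw [hker, commutator_def, Subgroup.commutator_le]
      intro a _ b _
      rw [MonoidHom.mem_ker, map_commutatorElement, commutatorElement_eq_one_iff_mul_comm]
      exact hcomm _ _
    · rintro _ ⟨x, rfl⟩
      let f : P →* Abelianization (P ⋊[φ] C) := Abelianization.of.comp SemidirectProduct.inl
      have : Finite C := Nat.finite_of_card_ne_zero (by omega)
      have : Nontrivial C := Finite.one_lt_card_iff_nontrivial.mp (by omega)
      obtain ⟨c, hc⟩ := exists_ne (1 : C)
      -- `τ x` is the conjugate of `x` by the generator of `C`.
      have hconj : f (τ x) = f x := by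
        simp only [f, MonoidHom.comp_apply, ← hφ c hc, SemidirectProduct.inl_aut, map_mul, map_inv]
        rw [mul_comm, inv_mul_cancel_left]
      have hprod : f (τ x * x) = 1 :=
        Abelianization.commutator_subset_ker f (hinv x)
      have hsq : f x ^ 2 = 1 := by rw [pow_two]; rwa [map_mul, hconj] at hprod
      have hcard : f x ^ Nat.card (Abelianization P) = 1 := by
        rw [← Abelianization.lift_apply_of f x, ← map_pow, pow_card_eq_one', map_one]
      have hone : f x = 1 := by
        have h := pow_gcd_eq_one.mpr ⟨hsq, hcard⟩
        rwa [Nat.Coprime.gcd_eq_one (Nat.coprime_two_left.mpr hodd), pow_one] at h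
      exact (QuotientGroup.eq_one_iff _).mp hone
  have hcard : Nat.card (Abelianization (P ⋊[φ] C)) = 2 := by
    change (commutator (P ⋊[φ] C)).index = 2
    rw [heq, hker, Subgroup.index_ker,
      MonoidHom.range_eq_top.mpr SemidirectProduct.rightHom_surjective, Subgroup.card_top, hC]
  exact ⟨heq, isCyclic_of_prime_card hcard, hcard⟩
end

section
/- Let 1 → Z → Λ → Δ → 1 be an exact sequence of groups in which Z is a nontrivial, torsion-free subgroup contained in the centre of Λ. If H₂(Δ,ℤ) is infinite cyclic (isomorphic to ℤ) and the abelianization of Λ is finite, then Z is infinite cyclic (isomorphic to ℤ). -/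
/-!
Write `Δ = F / R` with `F` the free group on the set `Λ`, mapped to `Δ` through
`φ : F → Λ`, and put `Z = ker (Λ → Δ)`. As `Z` is central, `φ` kills `[F, R]`, and it maps
`R ∩ [F, F]` onto `Z ∩ [Λ, Λ]`; hence `Z ∩ [Λ, Λ]` is a quotient of the infinite cyclic Hopf
quotient `(R ∩ [F, F]) / [F, R]`. This is the exactness of `H₂(Δ) → Z → Λᵃᵇ` at `Z`.
If `N` is the order of `Λᵃᵇ`, then `z ↦ z ^ N` is an endomorphism of the abelian group `Z`,
injective since `Z` is torsion-free, with image in the cyclic group `Z ∩ [Λ, Λ]`. So `Z` is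
cyclic, and it is infinite because it is nontrivial and torsion-free.
-/

/-- `H₂(Δ,ℤ) ≅ ℤ` expressed via Hopf's formula: for every presentation `Δ = F/R` with
`F` free, the Hopf quotient `(R ∩ [F,F]) / [F,R]` is infinite cyclic, i.e. there is
`u ∈ R ∩ [F,F]` such that every element of `R ∩ [F,F]` agrees with a power `u^n` modulo
`[F,R]`, and no nonzero power of `u` lies in `[F,R]`. -/
def SchurMultiplierInfiniteCyclic (Δ : Type u) [Group Δ] : Prop :=
  ∀ (ι : Type u) (π : FreeGroup ι →* Δ), Function.Surjective π →
    ∃ u : FreeGroup ι,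
      u ∈ MonoidHom.ker π ⊓ commutator (FreeGroup ι) ∧
      (∀ x ∈ MonoidHom.ker π ⊓ commutator (FreeGroup ι),
        ∃ n : ℤ, (u ^ n)⁻¹ * x ∈ ⁅(⊤ : Subgroup (FreeGroup ι)), MonoidHom.ker π⁆) ∧
      (∀ n : ℤ, u ^ n ∈ ⁅(⊤ : Subgroup (FreeGroup ι)), MonoidHom.ker π⁆ → n = 0)

/-- **Lemma.** Let `1 → Z → Λ → Δ → 1` be exact with `Z = ker π` nontrivial, torsion-free
and central in `Λ`. If `H₂(Δ,ℤ) ≅ ℤ` and the abelianization of `Λ` is finite, then `Z`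
is infinite cyclic. -/
theorem central_kernel_infinite_cyclic
    (Λ Δ : Type) [Group Λ] [Group Δ]
    (π : Λ →* Δ) (hsurj : Function.Surjective π)
    (hcentral : MonoidHom.ker π ≤ Subgroup.center Λ)
    (hnontriv : MonoidHom.ker π ≠ ⊥)
    (htorsionfree : ∀ x ∈ MonoidHom.ker π, x ≠ 1 → ∀ n : ℕ, 0 < n → x ^ n ≠ 1)
    (hH2 : SchurMultiplierInfiniteCyclic Δ)
    (hab : Finite (Abelianization Λ)) :
    Nonempty (↥(MonoidHom.ker π) ≃* Multiplicative ℤ) := by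
  -- Present `Δ` by the free group on the underlying set of `Λ`, through `Λ` itself.
  let φ : FreeGroup Λ →* Λ := FreeGroup.lift id
  have hφ : Function.Surjective φ := fun x => ⟨FreeGroup.of x, by simp [φ]⟩
  obtain ⟨u, -, hgen, -⟩ := hH2 Λ (π.comp φ) (hsurj.comp hφ)
  -- `φ` maps `[F, R]` into `[Λ, Z] = 1`, since `Z` is central.
  have hFR : ∀ r ∈ ⁅(⊤ : Subgroup (FreeGroup Λ)), (π.comp φ).ker⁆, φ r = 1 := by
    suffices h : ⁅(⊤ : Subgroup (FreeGroup Λ)), (π.comp φ).ker⁆ ≤ φ.ker from fun r hr => h hr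
    rw [Subgroup.commutator_le]
    intro g _ r hr
    have hc := Subgroup.mem_center_iff.1 (hcentral (show φ r ∈ π.ker from hr)) (φ g)
    rw [MonoidHom.mem_ker, map_commutatorElement, commutatorElement_eq_one_iff_mul_comm]
    exact hc
  have hZcomm : ∀ z ∈ π.ker ⊓ commutator Λ, z ∈ Subgroup.zpowers (φ u) := by
    rintro z ⟨hz, hz'⟩
    have hmap : (commutator (FreeGroup Λ)).map φ = commutator Λ := by
      rw [commutator_def, commutator_def, Subgroup.map_commutator,
        Subgroup.map_top_of_surjective φ hφ]
    obtain ⟨x, hx, rfl⟩ := hmap.ge hz'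
    obtain ⟨n, hn⟩ := hgen x ⟨hz, hx⟩
    refine ⟨n, ?_⟩
    have h1 := hFR _ hn
    rw [map_mul, map_inv, map_zpow, inv_mul_eq_one] at h1
    exact h1
  -- The order `N` kills `Λᵃᵇ`, so `z ↦ z ^ N` carries `Z` into `Z ∩ [Λ, Λ]`.
  let N := Nat.card (Abelianization Λ)
  have hN : 0 < N := Nat.card_pos
  have hpow : ∀ z : π.ker, (z : Λ) ^ N ∈ Subgroup.zpowers (φ u) := fun z =>
    hZcomm _ ⟨pow_mem z.2 N, by
      change (z : Λ) ^ N ∈ commutator Λ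
      rw [← Abelianization.ker_of, MonoidHom.mem_ker, map_pow]
      exact pow_card_eq_one'⟩
  let f : π.ker →* Subgroup.zpowers (φ u) :=
    { toFun := fun z => ⟨(z : Λ) ^ N, hpow z⟩
      map_one' := by simp
      map_mul' := fun a b => Subtype.ext <|
        (show Commute (a : Λ) b from
          Subgroup.mem_center_iff.1 (hcentral b.2) a).mul_pow N }
  have hf : Function.Injective f := by
    rw [injective_iff_map_eq_one]
    intro z hz
    by_contra hne
    exact htorsionfree z z.2 (fun h => hne (Subtype.ext h)) N hN (congrArg Subtype.val hz)
  have hcyc : IsCyclic π.ker := isCyclic_of_injective f hf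
  obtain ⟨z, hz1⟩ := Subgroup.ne_bot_iff_exists_ne_one.1 hnontriv
  have hinf : Infinite π.ker := by
    by_contra hfin
    rw [not_infinite_iff_finite] at hfin
    exact htorsionfree z z.2 (fun h => hz1 (Subtype.ext h)) _ Nat.card_pos
      (congrArg Subtype.val (pow_card_eq_one' (x := z)))
  exact ⟨intCyclicMulEquiv.symm⟩
end
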